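/- arXiv:2405.20970 — 2 statements merged into one kernel-verified Lean document; each statement's English description precedes it below -/
import Mathlib

section
/- Fix C_u > 0, μ₁ ≥ 0, λ > 0, feature matrices X_p ∈ ℝ^{n_p×m}, X_u ∈ ℝ^{n_u×m} with n_u ≥ 1, the stacked matrix X_pu ∈ ℝ^{(n_p+n_u)×m} whose first n_p rows are X_p and last n_u rows are X_u, and a symmetric positive semidefinite matrix R ∈ ℝ^{(n_p+n_u)×(n_p+n_u)}. With M₁₁ = λI_m + 2C_u X_uᵀX_u + 2X_puᵀR X_pu + μ₁X_pᵀX_p, M₁₂ = 2C_u X_uᵀ1_u + 2X_puᵀR 1_pu + μ₁X_pᵀ1_p, M₂₁ = M₁₂ᵀ, and M₂₂ = 2C_u n_u + 2·1_puᵀR 1_pu + μ₁ n_p, the symmetric block matrix M = [[M₁₁, M₁₂], [M₂₁, M₂₂]] ∈ ℝ^{(m+1)×(m+1)} is positive definite; in particular M₂₂ > 0 and B = M₁₁ − (1/M₂₂) M₁₂ M₂₁ is symmetric positive definite, hence invertible. -/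
open Matrix

/-- `M₁₁ = λI_m + 2C_u X_uᵀX_u + 2X_puᵀR X_pu + μ₁X_pᵀX_p`. -/
noncomputable def pualM11 (np nu m : ℕ) (lam Cu mu1 : ℝ)
    (Xp : Matrix (Fin np) (Fin m) ℝ) (Xu : Matrix (Fin nu) (Fin m) ℝ)
    (R : Matrix (Fin np ⊕ Fin nu) (Fin np ⊕ Fin nu) ℝ) :
    Matrix (Fin m) (Fin m) ℝ :=
  lam • (1 : Matrix (Fin m) (Fin m) ℝ) + (2 * Cu) • (Xuᵀ * Xu)
    + (2 : ℝ) • ((Matrix.fromRows Xp Xu)ᵀ * R * Matrix.fromRows Xp Xu)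
    + mu1 • (Xpᵀ * Xp)

/-- `M₁₂ = 2C_u X_uᵀ1_u + 2X_puᵀR 1_pu + μ₁X_pᵀ1_p` (an `m × 1` column vector). -/
noncomputable def pualM12 (np nu m : ℕ) (Cu mu1 : ℝ)
    (Xp : Matrix (Fin np) (Fin m) ℝ) (Xu : Matrix (Fin nu) (Fin m) ℝ)
    (R : Matrix (Fin np ⊕ Fin nu) (Fin np ⊕ Fin nu) ℝ) :
    Fin m → ℝ :=
  (2 * Cu) • Xuᵀ.mulVec (fun _ => 1)
    + (2 : ℝ) • (Matrix.fromRows Xp Xu)ᵀ.mulVec (R.mulVec fun _ => 1)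
    + mu1 • Xpᵀ.mulVec (fun _ => 1)

/-- `M₂₂ = 2C_u n_u + 2·1_puᵀR 1_pu + μ₁ n_p` (a scalar). -/
noncomputable def pualM22 (np nu : ℕ) (Cu mu1 : ℝ)
    (R : Matrix (Fin np ⊕ Fin nu) (Fin np ⊕ Fin nu) ℝ) : ℝ :=
  2 * Cu * (nu : ℝ) + 2 * ((fun _ => (1 : ℝ)) ⬝ᵥ R.mulVec (fun _ => 1))
    + mu1 * (np : ℝ)

/-- Completing the quadratic form of the block matrix into squares. -/
lemma pual_key (np nu m : ℕ) (lam Cu mu1 : ℝ)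
    (Xp : Matrix (Fin np) (Fin m) ℝ) (Xu : Matrix (Fin nu) (Fin m) ℝ)
    (R : Matrix (Fin np ⊕ Fin nu) (Fin np ⊕ Fin nu) ℝ) (hR : R.IsSymm)
    (w : Fin m → ℝ) (t : ℝ) :
    w ⬝ᵥ (pualM11 np nu m lam Cu mu1 Xp Xu R) *ᵥ w
      + 2 * t * (w ⬝ᵥ pualM12 np nu m Cu mu1 Xp Xu R) + t ^ 2 * pualM22 np nu Cu mu1 R
    = lam * (w ⬝ᵥ w)
      + 2 * Cu * ((Xu *ᵥ w + t • fun _ => 1) ⬝ᵥ (Xu *ᵥ w + t • fun _ => 1))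
      + 2 * ((Matrix.fromRows Xp Xu *ᵥ w + t • fun _ => 1) ⬝ᵥ
          R *ᵥ (Matrix.fromRows Xp Xu *ᵥ w + t • fun _ => 1))
      + mu1 * ((Xp *ᵥ w + t • fun _ => 1) ⬝ᵥ (Xp *ᵥ w + t • fun _ => 1)) := by
  have tr : ∀ {k : Type} [Fintype k] (A : Matrix k (Fin m) ℝ) (y : k → ℝ),
      w ⬝ᵥ Aᵀ *ᵥ y = (A *ᵥ w) ⬝ᵥ y := by
    intro k _ A y
    rw [dotProduct_mulVec, vecMul_transpose]
  have sy : ∀ x y : Fin np ⊕ Fin nu → ℝ, x ⬝ᵥ R *ᵥ y = y ⬝ᵥ R *ᵥ x := by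
    intro x y
    rw [dotProduct_mulVec, ← mulVec_transpose, hR.eq, dotProduct_comm]
  have one : ∀ k : ℕ, (fun _ : Fin k => (1 : ℝ)) ⬝ᵥ (fun _ => 1) = k := by
    intro k; simp [dotProduct]
  unfold pualM11 pualM12 pualM22
  generalize hX : Matrix.fromRows Xp Xu = X
  simp only [add_mulVec, smul_mulVec, dotProduct_add, dotProduct_smul, smul_eq_mul,
    one_mulVec, ← mulVec_mulVec, tr, mulVec_add, mulVec_smul, add_dotProduct, smul_dotProduct, one]
  rw [sy (fun _ => 1) (X *ᵥ w), dotProduct_comm (fun _ => 1) (Xu *ᵥ w),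
    dotProduct_comm (fun _ => 1) (Xp *ᵥ w)]
  ring

/-- With `C_u > 0`, `μ₁ ≥ 0`, `λ > 0`, `n_u ≥ 1` and `R` symmetric positive
semidefinite, the symmetric block matrix `M = [[M₁₁, M₁₂], [M₂₁, M₂₂]]`
(`M₂₁ = M₁₂ᵀ`) is positive definite; in particular `M₂₂ > 0` and
`B = M₁₁ − (1/M₂₂) M₁₂ M₂₁` is symmetric positive definite, hence invertible. -/
theorem pual_block_matrix_posdef (np nu m : ℕ) (hnu : 1 ≤ nu)
    (lam Cu mu1 : ℝ) (hlam : 0 < lam) (hCu : 0 < Cu) (hmu : 0 ≤ mu1)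
    (Xp : Matrix (Fin np) (Fin m) ℝ) (Xu : Matrix (Fin nu) (Fin m) ℝ)
    (R : Matrix (Fin np ⊕ Fin nu) (Fin np ⊕ Fin nu) ℝ) (hRsymm : R.IsSymm)
    (hRpsd : ∀ v : Fin np ⊕ Fin nu → ℝ, 0 ≤ v ⬝ᵥ R.mulVec v) :
    (∀ v : Fin m ⊕ Unit → ℝ, v ≠ 0 →
      0 < v ⬝ᵥ (Matrix.fromBlocks (pualM11 np nu m lam Cu mu1 Xp Xu R)
          (Matrix.of fun i (_ : Unit) => pualM12 np nu m Cu mu1 Xp Xu R i)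
          (Matrix.of fun (_ : Unit) j => pualM12 np nu m Cu mu1 Xp Xu R j)
          (Matrix.of fun _ _ => pualM22 np nu Cu mu1 R)).mulVec v) ∧
    0 < pualM22 np nu Cu mu1 R ∧
    (pualM11 np nu m lam Cu mu1 Xp Xu R
      - (pualM22 np nu Cu mu1 R)⁻¹ •
          Matrix.vecMulVec (pualM12 np nu m Cu mu1 Xp Xu R)
            (pualM12 np nu m Cu mu1 Xp Xu R)).IsSymm ∧
    (∀ v : Fin m → ℝ, v ≠ 0 →
      0 < v ⬝ᵥ (pualM11 np nu m lam Cu mu1 Xp Xu R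
        - (pualM22 np nu Cu mu1 R)⁻¹ •
            Matrix.vecMulVec (pualM12 np nu m Cu mu1 Xp Xu R)
              (pualM12 np nu m Cu mu1 Xp Xu R)).mulVec v) ∧
    IsUnit (pualM11 np nu m lam Cu mu1 Xp Xu R
      - (pualM22 np nu Cu mu1 R)⁻¹ •
          Matrix.vecMulVec (pualM12 np nu m Cu mu1 Xp Xu R)
            (pualM12 np nu m Cu mu1 Xp Xu R)) := by
  have sq : ∀ {k : ℕ} (x : Fin k → ℝ), 0 ≤ x ⬝ᵥ x := fun x =>
    Finset.sum_nonneg fun i _ => mul_self_nonneg (x i)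
  have h22 : 0 < pualM22 np nu Cu mu1 R := by
    unfold pualM22
    have h1 := hRpsd (fun _ => 1)
    have h2 : (0 : ℝ) < nu := by exact_mod_cast hnu
    positivity
  have hw : ∀ (w : Fin m → ℝ) (t : ℝ), w ≠ 0 →
      0 < w ⬝ᵥ (pualM11 np nu m lam Cu mu1 Xp Xu R) *ᵥ w
      + 2 * t * (w ⬝ᵥ pualM12 np nu m Cu mu1 Xp Xu R) + t ^ 2 * pualM22 np nu Cu mu1 R := by
    intro w t hw
    rw [pual_key np nu m lam Cu mu1 Xp Xu R hRsymm w t]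
    have h0 : 0 < w ⬝ᵥ w :=
      lt_of_le_of_ne (sq w) (fun h => hw (dotProduct_self_eq_zero.mp h.symm))
    have h1 := sq (Xu *ᵥ w + t • fun _ => 1)
    have h2 := sq (Xp *ᵥ w + t • fun _ => 1)
    have h3 := hRpsd (Matrix.fromRows Xp Xu *ᵥ w + t • fun _ => 1)
    positivity
  have hsymm : (pualM11 np nu m lam Cu mu1 Xp Xu R
      - (pualM22 np nu Cu mu1 R)⁻¹ •
          Matrix.vecMulVec (pualM12 np nu m Cu mu1 Xp Xu R)
            (pualM12 np nu m Cu mu1 Xp Xu R)).IsSymm := by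
    unfold Matrix.IsSymm pualM11
    simp [transpose_sub, transpose_add, transpose_smul, transpose_mul, hRsymm.eq,
      transpose_vecMulVec, Matrix.mul_assoc]
  have hB : ∀ v : Fin m → ℝ, v ≠ 0 →
      0 < v ⬝ᵥ (pualM11 np nu m lam Cu mu1 Xp Xu R
        - (pualM22 np nu Cu mu1 R)⁻¹ •
            Matrix.vecMulVec (pualM12 np nu m Cu mu1 Xp Xu R)
              (pualM12 np nu m Cu mu1 Xp Xu R)).mulVec v := by
    intro v hv
    have h := hw v (-(v ⬝ᵥ pualM12 np nu m Cu mu1 Xp Xu R) / pualM22 np nu Cu mu1 R) hv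
    convert h using 1
    simp only [sub_mulVec, smul_mulVec, vecMulVec_mulVec, dotProduct_sub, dotProduct_smul,
      smul_eq_mul, MulOpposite.smul_eq_mul_unop, op_smul_eq_smul]
    rw [dotProduct_comm (pualM12 np nu m Cu mu1 Xp Xu R) v]
    field_simp
    ring
  refine ⟨?_, h22, hsymm, hB, ?_⟩
  · intro v hv
    obtain ⟨w, t, rfl⟩ : ∃ (w : Fin m → ℝ) (t : ℝ), v = Sum.elim w (fun _ => t) :=
      ⟨v ∘ Sum.inl, v (Sum.inr ()), by ext (i | i) <;> rfl⟩
    have e : ∀ M11 : Matrix (Fin m) (Fin m) ℝ, ∀ a : Fin m → ℝ, ∀ d : ℝ,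
        (Sum.elim w (fun _ : Unit => t)) ⬝ᵥ (Matrix.fromBlocks M11
          (Matrix.of fun i (_ : Unit) => a i) (Matrix.of fun (_ : Unit) j => a j)
          (Matrix.of fun _ _ => d)) *ᵥ (Sum.elim w (fun _ : Unit => t))
        = w ⬝ᵥ M11 *ᵥ w + 2 * t * (w ⬝ᵥ a) + t ^ 2 * d := by
      intro M11 a d
      have e1 : (Matrix.of fun i (_ : Unit) => a i) *ᵥ (fun _ : Unit => t) = t • a := by
        ext i; simp [mulVec, dotProduct, mul_comm]
      have e2 : (Matrix.of fun (_ : Unit) j => a j) *ᵥ w = fun _ => w ⬝ᵥ a := by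
        ext i; simp [mulVec, dotProduct, mul_comm]
      have e3 : (Matrix.of fun (_ : Unit) (_ : Unit) => d) *ᵥ (fun _ : Unit => t)
          = fun _ => d * t := by
        ext i; simp [mulVec, dotProduct]
      rw [fromBlocks_mulVec]
      simp only [Sum.elim_comp_inl, Sum.elim_comp_inr, sumElim_dotProduct_sumElim, e1, e2, e3,
        dotProduct_add, dotProduct_smul, smul_eq_mul]
      simp [dotProduct]
      ring
    rw [e]
    by_cases h0 : w = 0
    · subst h0
      have ht : t ≠ 0 := by
        rintro rfl
        exact hv (by ext (i | i) <;> rfl)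
      simp only [zero_dotProduct, mul_zero, zero_add]
      positivity
    · exact hw w t h0
  · refine Matrix.PosDef.isUnit (Matrix.posDef_iff_dotProduct_mulVec.mpr ⟨?_, ?_⟩)
    · unfold Matrix.IsHermitian
      rw [conjTranspose_eq_transpose_of_trivial]
      exact hsymm
    · intro x hx
      simpa using hB x hx
end

section
/- Fix λ > 0, C_u ≥ 0, μ₁ ≥ 0, feature matrices X_p ∈ ℝ^{n_p×m}, X_u ∈ ℝ^{n_u×m}, the stacked matrix X_pu ∈ ℝ^{(n_p+n_u)×m} whose first n_p rows are X_p and last n_u rows are X_u, a symmetric positive semidefinite matrix R ∈ ℝ^{(n_p+n_u)×(n_p+n_u)}, and vectors h, u ∈ ℝ^{n_p}. Define L(β, β₀) = (λ/2)βᵀβ + C_u (1_u + X_uβ + 1_uβ₀)ᵀ(1_u + X_uβ + 1_uβ₀) + (X_puβ + 1_puβ₀)ᵀ R (X_puβ + 1_puβ₀) + uᵀ(1_p − X_pβ − 1_pβ₀ − h) + (μ₁/2)‖1_p − X_pβ − 1_pβ₀ − h‖². With M₁₁ = λI_m + 2C_u X_uᵀX_u + 2X_puᵀR X_pu + μ₁X_pᵀX_p,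 M₁₂ = 2C_u X_uᵀ1_u + 2X_puᵀR 1_pu + μ₁X_pᵀ1_p, M₂₁ = M₁₂ᵀ, M₂₂ = 2C_u n_u + 2·1_puᵀR 1_pu + μ₁ n_p, m₁ = −2C_u X_uᵀ1_u + X_pᵀu + μ₁X_pᵀ(1_p − h), and m₂ = −2C_u n_u + uᵀ1_p + μ₁(1_p − h)ᵀ1_p, a point (β, β₀) ∈ ℝᵐ × ℝ is a global minimizer of L if and only if M₁₁β + M₁₂β₀ = m₁ and M₂₁β + M₂₂β₀ = m₂. -/
open Matrix

/-- `m₁ = −2C_u X_uᵀ1_u + X_pᵀu + μ₁X_pᵀ(1_p − h)`. -/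
noncomputable def pualm1 (np nu m : ℕ) (Cu mu1 : ℝ)
    (Xp : Matrix (Fin np) (Fin m) ℝ) (Xu : Matrix (Fin nu) (Fin m) ℝ)
    (h u : Fin np → ℝ) : Fin m → ℝ :=
  -((2 * Cu) • Xuᵀ.mulVec (fun _ => 1)) + Xpᵀ.mulVec u
    + mu1 • Xpᵀ.mulVec (fun i => 1 - h i)

/-- `m₂ = −2C_u n_u + uᵀ1_p + μ₁(1_p − h)ᵀ1_p`. -/
noncomputable def pualm2 (np nu : ℕ) (Cu mu1 : ℝ) (h u : Fin np → ℝ) : ℝ :=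
  -(2 * Cu * (nu : ℝ)) + u ⬝ᵥ (fun _ => 1)
    + mu1 * ((fun i => (1 : ℝ) - h i) ⬝ᵥ (fun _ => 1))

/-- The augmented Lagrangian of PUAL restricted to the `(β, β₀)`-update of ADMM:
`L(β, β₀) = (λ/2)βᵀβ + C_u (1_u + X_uβ + 1_uβ₀)ᵀ(1_u + X_uβ + 1_uβ₀)
  + (X_puβ + 1_puβ₀)ᵀ R (X_puβ + 1_puβ₀) + uᵀ(1_p − X_pβ − 1_pβ₀ − h)
  + (μ₁/2)‖1_p − X_pβ − 1_pβ₀ − h‖²`. -/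
noncomputable def pualL (np nu m : ℕ) (lam Cu mu1 : ℝ)
    (Xp : Matrix (Fin np) (Fin m) ℝ) (Xu : Matrix (Fin nu) (Fin m) ℝ)
    (R : Matrix (Fin np ⊕ Fin nu) (Fin np ⊕ Fin nu) ℝ)
    (h u : Fin np → ℝ) (β : Fin m → ℝ) (β₀ : ℝ) : ℝ :=
  lam / 2 * (β ⬝ᵥ β)
  + Cu * ((fun i => 1 + Xu.mulVec β i + β₀) ⬝ᵥ (fun i => 1 + Xu.mulVec β i + β₀))
  + ((Matrix.fromRows Xp Xu).mulVec β + fun _ => β₀) ⬝ᵥ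
      (R.mulVec ((Matrix.fromRows Xp Xu).mulVec β + fun _ => β₀))
  + u ⬝ᵥ (fun i => 1 - Xp.mulVec β i - β₀ - h i)
  + mu1 / 2 * ((fun i => 1 - Xp.mulVec β i - β₀ - h i) ⬝ᵥ
      (fun i => 1 - Xp.mulVec β i - β₀ - h i))


/-- The quadratic part of the Lagrangian. -/
noncomputable def pualQ (np nu m : ℕ) (lam Cu mu1 : ℝ)
    (Xp : Matrix (Fin np) (Fin m) ℝ) (Xu : Matrix (Fin nu) (Fin m) ℝ)
    (R : Matrix (Fin np ⊕ Fin nu) (Fin np ⊕ Fin nu) ℝ) (d : Fin m → ℝ) (e : ℝ) : ℝ :=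
  lam / 2 * (d ⬝ᵥ d) + Cu * ((Xu.mulVec d + e • 1) ⬝ᵥ (Xu.mulVec d + e • 1))
    + ((Matrix.fromRows Xp Xu).mulVec d + e • 1) ⬝ᵥ
        R.mulVec ((Matrix.fromRows Xp Xu).mulVec d + e • 1)
    + mu1 / 2 * ((Xp.mulVec d + e • 1) ⬝ᵥ (Xp.mulVec d + e • 1))

lemma pual_dot_transpose {k l : Type*} [Fintype k] [Fintype l] (A : Matrix k l ℝ)
    (d : l → ℝ) (v : k → ℝ) : d ⬝ᵥ Aᵀ.mulVec v = A.mulVec d ⬝ᵥ v := by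
  rw [Matrix.mulVec_transpose, dotProduct_comm, ← Matrix.dotProduct_mulVec, dotProduct_comm]

lemma pual_expand (np nu m : ℕ) (lam Cu mu1 : ℝ)
    (Xp : Matrix (Fin np) (Fin m) ℝ) (Xu : Matrix (Fin nu) (Fin m) ℝ)
    (R : Matrix (Fin np ⊕ Fin nu) (Fin np ⊕ Fin nu) ℝ) (hRsymm : R.IsSymm)
    (h u : Fin np → ℝ) (β d : Fin m → ℝ) (β₀ e : ℝ) :
    pualL np nu m lam Cu mu1 Xp Xu R h u (β + d) (β₀ + e) =
      pualL np nu m lam Cu mu1 Xp Xu R h u β β₀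
      + (d ⬝ᵥ ((pualM11 np nu m lam Cu mu1 Xp Xu R).mulVec β
          + β₀ • pualM12 np nu m Cu mu1 Xp Xu R - pualm1 np nu m Cu mu1 Xp Xu h u)
        + e * (pualM12 np nu m Cu mu1 Xp Xu R ⬝ᵥ β + pualM22 np nu Cu mu1 R * β₀
        - pualm2 np nu Cu mu1 h u))
      + pualQ np nu m lam Cu mu1 Xp Xu R d e := by
  have hR : ∀ v w : Fin np ⊕ Fin nu → ℝ, v ⬝ᵥ R.mulVec w = w ⬝ᵥ R.mulVec v := by
    intro v w
    conv_lhs => rw [← hRsymm.eq]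
    rw [pual_dot_transpose, dotProduct_comm]
  have c1 : ∀ (k : Type) (c : ℝ), (fun _ : k => c) = c • (1 : k → ℝ) := by
    intro k c; ext; simp
  have e1 : ∀ (b : Fin m → ℝ) (c : ℝ),
      (fun i => 1 + Xu.mulVec b i + c) = 1 + Xu.mulVec b + c • (1 : Fin nu → ℝ) := by
    intro b c; ext; simp
  have e2 : ∀ (b : Fin m → ℝ) (c : ℝ),
      (fun i => 1 - Xp.mulVec b i - c - h i) = 1 - Xp.mulVec b - c • (1 : Fin np → ℝ) - h := by
    intro b c; ext; simp
  have e3 : (fun i => 1 - h i) = 1 - h := by ext; simp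
  have n1 : (nu : ℝ) = (1 : Fin nu → ℝ) ⬝ᵥ 1 := by simp
  have n2 : (np : ℝ) = (1 : Fin np → ℝ) ⬝ᵥ 1 := by simp
  have hM12 : pualM12 np nu m Cu mu1 Xp Xu R ⬝ᵥ β = β ⬝ᵥ pualM12 np nu m Cu mu1 Xp Xu R :=
    dotProduct_comm _ _
  rw [hM12]
  unfold pualL pualM11 pualM12 pualM22 pualm1 pualm2 pualQ
  simp only [e1, e2, e3, c1, n1, n2, one_smul]
  generalize Matrix.fromRows Xp Xu = X
  simp only [Matrix.add_mulVec, Matrix.smul_mulVec, Matrix.one_mulVec, ← Matrix.mulVec_mulVec,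
    Matrix.mulVec_add, Matrix.mulVec_smul, dotProduct_add, add_dotProduct, dotProduct_sub,
    sub_dotProduct, dotProduct_smul, smul_dotProduct, dotProduct_neg, pual_dot_transpose,
    smul_eq_mul]
  generalize Xu.mulVec β = a
  generalize Xu.mulVec d = a'
  generalize Xp.mulVec β = b
  generalize Xp.mulVec d = b'
  generalize X.mulVec β = x
  generalize X.mulVec d = x'
  rw [hR x' x, hR 1 x, hR 1 x', dotProduct_comm d β,
    dotProduct_comm a' a, dotProduct_comm 1 a, dotProduct_comm 1 a',
    dotProduct_comm b' b, dotProduct_comm 1 b, dotProduct_comm 1 b',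
    dotProduct_comm h b, dotProduct_comm h b', dotProduct_comm h 1,
    dotProduct_comm u b']
  ring

lemma pualQ_smul (np nu m : ℕ) (lam Cu mu1 : ℝ)
    (Xp : Matrix (Fin np) (Fin m) ℝ) (Xu : Matrix (Fin nu) (Fin m) ℝ)
    (R : Matrix (Fin np ⊕ Fin nu) (Fin np ⊕ Fin nu) ℝ) (d : Fin m → ℝ) (e t : ℝ) :
    pualQ np nu m lam Cu mu1 Xp Xu R (t • d) (t * e)
      = t ^ 2 * pualQ np nu m lam Cu mu1 Xp Xu R d e := by
  unfold pualQ
  simp only [Matrix.mulVec_smul, mul_smul, ← smul_add, dotProduct_smul, smul_dotProduct,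
    smul_eq_mul]
  ring

lemma pualQ_nonneg (np nu m : ℕ) (lam Cu mu1 : ℝ)
    (hlam : 0 < lam) (hCu : 0 ≤ Cu) (hmu : 0 ≤ mu1)
    (Xp : Matrix (Fin np) (Fin m) ℝ) (Xu : Matrix (Fin nu) (Fin m) ℝ)
    (R : Matrix (Fin np ⊕ Fin nu) (Fin np ⊕ Fin nu) ℝ)
    (hRpsd : ∀ v : Fin np ⊕ Fin nu → ℝ, 0 ≤ v ⬝ᵥ R.mulVec v) (d : Fin m → ℝ) (e : ℝ) :
    0 ≤ pualQ np nu m lam Cu mu1 Xp Xu R d e := by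
  have sq : ∀ {k : ℕ} (v : Fin k → ℝ), 0 ≤ v ⬝ᵥ v := fun v =>
    Finset.sum_nonneg fun i _ => mul_self_nonneg (v i)
  unfold pualQ
  have h1 := mul_nonneg (half_pos hlam).le (sq d)
  have h2 := mul_nonneg hCu (sq (Xu.mulVec d + e • 1))
  have h3 := hRpsd ((Matrix.fromRows Xp Xu).mulVec d + e • 1)
  have h4 := mul_nonneg (div_nonneg hmu zero_le_two) (sq (Xp.mulVec d + e • 1))
  linarith

lemma pual_lin_zero (g q : ℝ) (hq : 0 ≤ q) (H : ∀ t : ℝ, 0 ≤ t * g + t ^ 2 * q) : g = 0 := by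
  have h1 := H (-g / (q + 1))
  have hp : 0 < q + 1 := by linarith
  have h2 : -g / (q + 1) * g + (-g / (q + 1)) ^ 2 * q = -(g ^ 2 / (q + 1) ^ 2) := by
    field_simp
    ring
  rw [h2] at h1
  have h3 : g ^ 2 / (q + 1) ^ 2 = 0 := le_antisymm (by linarith) (by positivity)
  have h4 : g ^ 2 = 0 := by
    rcases div_eq_zero_iff.mp h3 with h | h
    · exact h
    · exact absurd h (by positivity)
  exact pow_eq_zero_iff (two_ne_zero) |>.mp h4

/-- For `λ > 0`, `C_u ≥ 0`, `μ₁ ≥ 0` and symmetric positive semidefinite `R`, a point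
`(β, β₀)` is a global minimizer of the augmented Lagrangian `L` iff
`M₁₁β + M₁₂β₀ = m₁` and `M₂₁β + M₂₂β₀ = m₂` (with `M₂₁ = M₁₂ᵀ`). -/
theorem pual_beta_update_characterization (np nu m : ℕ) (lam Cu mu1 : ℝ)
    (hlam : 0 < lam) (hCu : 0 ≤ Cu) (hmu : 0 ≤ mu1)
    (Xp : Matrix (Fin np) (Fin m) ℝ) (Xu : Matrix (Fin nu) (Fin m) ℝ)
    (R : Matrix (Fin np ⊕ Fin nu) (Fin np ⊕ Fin nu) ℝ) (hRsymm : R.IsSymm)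
    (hRpsd : ∀ v : Fin np ⊕ Fin nu → ℝ, 0 ≤ v ⬝ᵥ R.mulVec v)
    (h u : Fin np → ℝ) (β : Fin m → ℝ) (β₀ : ℝ) :
    (∀ (β' : Fin m → ℝ) (β₀' : ℝ),
        pualL np nu m lam Cu mu1 Xp Xu R h u β β₀
          ≤ pualL np nu m lam Cu mu1 Xp Xu R h u β' β₀')
      ↔
    ((pualM11 np nu m lam Cu mu1 Xp Xu R).mulVec β
        + β₀ • pualM12 np nu m Cu mu1 Xp Xu R = pualm1 np nu m Cu mu1 Xp Xu h u ∧
      pualM12 np nu m Cu mu1 Xp Xu R ⬝ᵥ β + pualM22 np nu Cu mu1 R * β₀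
        = pualm2 np nu Cu mu1 h u) := by
  constructor
  · intro H
    set G1 := (pualM11 np nu m lam Cu mu1 Xp Xu R).mulVec β
          + β₀ • pualM12 np nu m Cu mu1 Xp Xu R - pualm1 np nu m Cu mu1 Xp Xu h u with hG1
    set G2 := pualM12 np nu m Cu mu1 Xp Xu R ⬝ᵥ β + pualM22 np nu Cu mu1 R * β₀
        - pualm2 np nu Cu mu1 h u with hG2
    have key : G1 ⬝ᵥ G1 + G2 * G2 = 0 := by
      apply pual_lin_zero _ _
        (pualQ_nonneg np nu m lam Cu mu1 hlam hCu hmu Xp Xu R hRpsd G1 G2)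
      intro t
      have h1 := H (β + t • G1) (β₀ + t * G2)
      rw [pual_expand np nu m lam Cu mu1 Xp Xu R hRsymm, pualQ_smul, ← hG1, ← hG2,
        smul_dotProduct, smul_eq_mul] at h1
      linarith
    have hn : 0 ≤ G1 ⬝ᵥ G1 := Finset.sum_nonneg fun i _ => mul_self_nonneg (G1 i)
    have hz1 : G1 ⬝ᵥ G1 = 0 := by nlinarith [mul_self_nonneg G2]
    have hz2 : G2 * G2 = 0 := by linarith
    exact ⟨sub_eq_zero.mp (dotProduct_self_eq_zero.mp hz1),
      sub_eq_zero.mp (mul_self_eq_zero.mp hz2)⟩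
  · rintro ⟨h1, h2⟩ β' β₀'
    have h3 := pual_expand np nu m lam Cu mu1 Xp Xu R hRsymm h u β (β' - β) β₀ (β₀' - β₀)
    rw [h1, h2, sub_self, sub_self, dotProduct_zero, mul_zero, add_sub_cancel,
      add_sub_cancel] at h3
    have h4 := pualQ_nonneg np nu m lam Cu mu1 hlam hCu hmu Xp Xu R hRpsd (β' - β) (β₀' - β₀)
    linarith
end
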